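/- Let S be a regular group-bound semigroup all of whose D-classes (with respect to Green's relation D) are finite. Then for all x, y ∈ S, x ∼ y if and only if x ≡ y; that is, x and y are conjugate (in the transitive-closure-of-uv∼vu sense) if and only if χ_φ(x) = χ_φ(y) for every finite-dimensional complex representation φ of S. -/

import Mathlib

namespace SgConjPaper

/-- `spow x n = x^(n+1)`: positive powers of an element of a semigroup. -/
def spow {S : Type*} [Semigroup S] (x : S) : ℕ → S
  | 0 => x
  | n + 1 => spow x n * x

/-- `a` lies in the maximal subgroup of `S` whose identity is the idempotent
`e` (i.e. `e` is a two-sided identity for `a` and `a` is invertible over `e`). -/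
def InMaxSubgroup {S : Type*} [Semigroup S] (e a : S) : Prop :=
  e * a = a ∧ a * e = a ∧ ∃ b : S, e * b = b ∧ b * e = b ∧ a * b = e ∧ b * a = e

/-- `e` is the idempotent `e_x`: the identity of the maximal subgroup
containing some positive power of `x`. -/
def IsEIdem {S : Type*} [Semigroup S] (x e : S) : Prop :=
  ∃ k : ℕ, InMaxSubgroup e (spow x k)

/-- A semigroup is group-bound if some positive power of every element lies
in a subgroup. -/
def GroupBound (S : Type*) [Semigroup S] : Prop := ∀ x : S, ∃ e : S, IsEIdem x e

/-- Primary conjugacy: `x = uv`, `y = vu` for some `u, v ∈ S¹`. -/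
def PrimConj {S : Type*} [Semigroup S] (x y : S) : Prop :=
  ∃ u v : WithOne S, (x : WithOne S) = u * v ∧ (y : WithOne S) = v * u

/-- Conjugacy `∼`: the transitive closure of primary conjugacy. -/
def SgConj {S : Type*} [Semigroup S] : S → S → Prop := Relation.TransGen PrimConj

/-- Conjugacy in the character sense `≡`: equal traces under every
finite-dimensional complex representation. -/
def CharEq {S : Type*} [Semigroup S] (x y : S) : Prop :=
  ∀ (V : Type) (_ : AddCommGroup V) (_ : Module ℂ V) (_ : FiniteDimensional ℂ V)
    (φ : S →ₙ* Module.End ℂ V),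
    LinearMap.trace ℂ V (φ x) = LinearMap.trace ℂ V (φ y)

/-- A semigroup is regular if for every `a` there is `b` with `a = aba`. -/
def Regular (S : Type*) [Semigroup S] : Prop := ∀ a : S, ∃ b : S, a * b * a = a

/-- Green's relation `R`. -/
def RRel {S : Type*} [Semigroup S] (x y : S) : Prop :=
  (∃ u : WithOne S, (x : WithOne S) = y * u) ∧ (∃ v : WithOne S, (y : WithOne S) = x * v)

/-- Green's relation `L`. -/
def LRel {S : Type*} [Semigroup S] (x y : S) : Prop :=
  (∃ u : WithOne S, (x : WithOne S) = u * y) ∧ (∃ v : WithOne S, (y : WithOne S) = v * x)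

/-- Green's relation `D` (= `L ∘ R`). -/
def DRel {S : Type*} [Semigroup S] (x y : S) : Prop := ∃ z : S, LRel x z ∧ RRel z y

/-- Green's relation `H`. -/
def HRel {S : Type*} [Semigroup S] (x y : S) : Prop := LRel x y ∧ RRel x y

/-- All `D`-classes of `S` are finite. -/
def FiniteDClasses (S : Type*) [Semigroup S] : Prop := ∀ x : S, {y : S | DRel x y}.Finite

/-!
Conjugate elements have equal characters because `tr (AB) = tr (BA)`. For the converse, let `e` be
the identity of the maximal subgroup containing a power `xⁿ`. If `c`, `d` are inner inverses of
`xᵏ`, `xᵏ⁺¹`, then `x xᵏ c` and `x xᵏ⁺¹ d` are primarily conjugate; climbing from `x` up to `xⁿ`,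
whose inner inverse may be taken in the subgroup, gives `x ∼ x e`, and `x e` lies in the maximal
subgroup at `e`. So assume that `x` and `y` lie in the maximal subgroups at `e` and `f`.

If `φ` is a representation and `r` commutes with it, then `tr (φ s * r)` is a combination of the
characters of `φ` on the generalised eigenspaces of `r`, so it agrees at `s = x` and `s = y` when
`x ≡ y`. Applied to the left Schützenberger representation on the `L`-class of `e` and to right
translation by `x⁻¹`, this says that `{l | s * l = l * x}` has the same size for `s = x` and
`s = y`. It contains `e` in the first case, so there is an `l` in the `L`-class of `e` with
`y * l = l * x`, and by symmetry an `m` in the `L`-class of `f` with `x * m = m * y`. Since `m * l`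
is left invertible over `e`, group-boundness makes it a unit of the maximal subgroup at `e`; with
inverse `v`, `x = (x * v * m) * l` and `y = l * (x * v * m)`.
-/

section GroupElements

variable {S : Type*} [Semigroup S] {x e a c w l r : S} {k : ℕ}

theorem spow_succ' (x : S) (k : ℕ) : spow x (k + 1) = x * spow x k := by
  induction k with
  | zero => rfl
  | succ k ih => rw [spow, ih, mul_assoc, ← spow, ih]

theorem commute_spow (x : S) (k : ℕ) : Commute x (spow x k) :=
  (spow_succ' x k).symm

theorem exists_mul_eq_spow_mul (x b : S) : ∀ k, ∃ r, x * r = spow x k * b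
  | 0 => ⟨b, rfl⟩
  | k + 1 => ⟨spow x k * b, by rw [← mul_assoc, ← spow_succ']⟩

theorem exists_mul_eq_mul_spow (x b : S) : ∀ k, ∃ l, l * x = b * spow x k
  | 0 => ⟨b, rfl⟩
  | k + 1 => ⟨b * spow x k, by rw [mul_assoc, ← spow]⟩

theorem mul_spow_of_mul_eq (h : e * w = w) : ∀ k, e * spow w k = spow w k
  | 0 => h
  | k + 1 => by rw [spow, ← mul_assoc, mul_spow_of_mul_eq h k]

theorem exists_mul_spow_eq (ew : e * w = w) (cw : c * w = e) : ∀ k, ∃ d, d * spow w k = e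
  | 0 => ⟨c, cw⟩
  | k + 1 => by
    obtain ⟨d, hd⟩ := exists_mul_spow_eq ew cw k
    exact ⟨c * d, by rw [spow, mul_assoc, ← mul_assoc d, hd, ew, cw]⟩

namespace InMaxSubgroup

theorem mul_self (h : InMaxSubgroup e a) : e * e = e := by
  obtain ⟨ea, -, b, -, -, ab, -⟩ := h
  calc
    e * e = e * a * b := by rw [mul_assoc, ab]
    _ = e := by rw [ea, ab]

theorem of_mul_eq (he : e * e = e) (ea : e * a = a) (ae : a * e = a) (ar : a * r = e)
    (la : l * a = e) : InMaxSubgroup e a := by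
  have hlr : l * e = e * r := by rw [← la, mul_assoc, ar, la]
  refine ⟨ea, ae, l * e, ?_, ?_, ?_, ?_⟩
  · rw [hlr, ← mul_assoc, he]
  · rw [mul_assoc, he]
  · rw [hlr, ← mul_assoc, ae, ar]
  · rw [mul_assoc, ea, la]

theorem exists_inverse (h : InMaxSubgroup e a) :
    ∃ b, InMaxSubgroup e b ∧ a * b = e ∧ b * a = e := by
  obtain ⟨ea, ae, b, eb, be, ab, ba⟩ := h
  exact ⟨b, ⟨eb, be, a, ea, ae, ba, ab⟩, ab, ba⟩

theorem commute_idem (h : InMaxSubgroup e a) (hx : Commute x a) : Commute e x := by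
  obtain ⟨b, -, ab, ba⟩ := h.exists_inverse
  have hex : e * x = e * x * e := calc
    e * x = b * (x * a) := by rw [hx.eq, ← mul_assoc, ba]
    _ = b * (x * a) * e := by rw [mul_assoc, mul_assoc, h.2.1]
    _ = e * x * e := by rw [hx.eq, ← mul_assoc, ba]
  have hxe : x * e = e * x * e := calc
    x * e = a * x * b := by rw [← hx.eq, mul_assoc, ab]
    _ = e * (a * x) * b := by rw [← mul_assoc, h.1]
    _ = e * x * e := by rw [← hx.eq, mul_assoc, mul_assoc, ab, mul_assoc]
  exact hex.trans hxe.symm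

theorem mul_idem_of_spow (h : InMaxSubgroup e (spow x k)) : InMaxSubgroup e (x * e) := by
  have he := h.mul_self
  have ex := (h.commute_idem (commute_spow x k)).eq
  obtain ⟨-, -, b, -, -, ab, ba⟩ := h
  obtain ⟨r, hr⟩ := exists_mul_eq_spow_mul x b k
  obtain ⟨l, hl⟩ := exists_mul_eq_mul_spow x b k
  exact .of_mul_eq (r := r) (l := l) he (by grind) (by grind) (by grind) (by grind)

end InMaxSubgroup

theorem GroupBound.inMaxSubgroup_of_mul_eq (hGB : GroupBound S) (ew : e * w = w)
    (we : w * e = w) (cw : c * w = e) : InMaxSubgroup e w := by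
  obtain ⟨f, k, -, wf, b, -, -, wb, -⟩ := hGB w
  obtain ⟨d, hd⟩ := exists_mul_spow_eq ew cw k
  have hef : e = f := calc
    e = e * f := by rw [← hd, mul_assoc, wf]
    _ = f := by rw [← wb, ← mul_assoc, mul_spow_of_mul_eq ew]
  obtain ⟨r, hr⟩ := exists_mul_eq_spow_mul w b k
  exact .of_mul_eq (by grind) ew we (by rw [hr, wb, hef]) cw

end GroupElements

section Conjugacy

variable {S : Type*} [Semigroup S] {x y z a c d e f l m : S} {k : ℕ}

theorem primConj_mul_comm (u v : S) : PrimConj (u * v) (v * u) :=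
  ⟨u, v, WithOne.coe_mul u v, WithOne.coe_mul v u⟩

theorem PrimConj.symm (h : PrimConj x y) : PrimConj y x := by
  obtain ⟨u, v, hx, hy⟩ := h
  exact ⟨v, u, hy, hx⟩

theorem SgConj.symm (h : SgConj x y) : SgConj y x :=
  Relation.TransGen.mono (r := Function.swap PrimConj) (fun _ _ => PrimConj.symm) _ _ h.swap

theorem primConj_mul_inner_inverse (hxa : Commute x a) (hc : a * c * a = a)
    (hd : x * a * d * (x * a) = x * a) : PrimConj (x * (a * c)) (x * (x * a * d)) := by
  have h₁ : x * a * d * (x * (a * c)) = x * (a * c) := by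
    rw [← mul_assoc x, ← mul_assoc _ (x * a), hd]
  have h₂ : x * (a * c) * (x * a * d) = x * (x * a * d) := calc
    x * (a * c) * (x * a * d) = x * (a * c * a) * x * d := by rw [hxa.eq]; simp only [mul_assoc]
    _ = x * (x * a * d) := by rw [hc, mul_assoc x a, ← hxa.eq]; simp only [mul_assoc]
  have := primConj_mul_comm (x * a * d) (x * (a * c))
  rwa [h₁, h₂] at this

theorem Regular.sgConj_mul_spow_mul (hreg : Regular S) :
    ∀ {k : ℕ} {c : S}, spow x k * c * spow x k = spow x k → SgConj x (x * (spow x k * c))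
  | 0, c, hc => by
    have := primConj_mul_comm (x * c) x
    rw [show x * c * x = x from hc] at this
    exact .single this
  | k + 1, d, hd => by
    obtain ⟨c, hc⟩ := hreg (spow x k)
    rw [spow_succ'] at hd ⊢
    exact (hreg.sgConj_mul_spow_mul hc).tail
      (primConj_mul_inner_inverse (commute_spow x k) hc hd)

theorem Regular.sgConj_mul_idem (hreg : Regular S) (h : InMaxSubgroup e (spow x k)) :
    SgConj x (x * e) := by
  obtain ⟨ea, -, b, -, -, ab, -⟩ := h
  exact ab ▸ hreg.sgConj_mul_spow_mul (by rw [ab, ea])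

theorem LRel.refl (a : S) : LRel a a :=
  ⟨⟨1, (one_mul _).symm⟩, ⟨1, (one_mul _).symm⟩⟩

theorem LRel.trans (hxy : LRel x y) (hyz : LRel y z) : LRel x z := by
  obtain ⟨⟨u, hu⟩, v, hv⟩ := hxy
  obtain ⟨⟨p, hp⟩, q, hq⟩ := hyz
  exact ⟨⟨u * p, by rw [hu, hp, mul_assoc]⟩, ⟨q * v, by rw [hq, hv, mul_assoc]⟩⟩

theorem LRel.mul_right (h : LRel x y) (z : S) : LRel (x * z) (y * z) := by
  obtain ⟨⟨u, hu⟩, v, hv⟩ := h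
  exact ⟨⟨u, by rw [WithOne.coe_mul, WithOne.coe_mul, hu, mul_assoc]⟩,
    ⟨v, by rw [WithOne.coe_mul, WithOne.coe_mul, hv, mul_assoc]⟩⟩

theorem LRel.of_mul_mul {s t : S} (h : LRel c l) (hst : LRel c (s * (t * l))) :
    LRel c (t * l) := by
  obtain ⟨-, v, hv⟩ := h
  obtain ⟨⟨u, hu⟩, -⟩ := hst
  exact ⟨⟨u * s, by rw [hu, WithOne.coe_mul s, mul_assoc]⟩,
    ⟨t * v, by rw [WithOne.coe_mul, hv, mul_assoc]⟩⟩

theorem LRel.mul_eq_self (he : e * e = e) (h : LRel e l) : l * e = l := by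
  obtain ⟨-, v, hv⟩ := h
  rw [← WithOne.coe_inj, WithOne.coe_mul, hv, mul_assoc, ← WithOne.coe_mul, he]

theorem LRel.exists_mul_eq (he : e * e = e) (h : LRel e l) : ∃ a, a * l = e := by
  obtain ⟨⟨u, hu⟩, -⟩ := h
  refine WithOne.cases_on u (fun hu => ⟨e, ?_⟩) (fun a hu => ⟨a, ?_⟩) hu
  · rw [one_mul, WithOne.coe_inj] at hu
    rw [← hu, he]
  · rw [← WithOne.coe_inj, WithOne.coe_mul, hu]

theorem InMaxSubgroup.lRel (h : InMaxSubgroup e a) : LRel e a := by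
  obtain ⟨-, ae, b, -, -, -, ba⟩ := h
  exact ⟨⟨b, by rw [← WithOne.coe_mul, ba]⟩, ⟨a, by rw [← WithOne.coe_mul, ae]⟩⟩

theorem mul_eq_self_of_mul_eq_mul (hx : InMaxSubgroup e x) (hy : InMaxSubgroup f y)
    (hl : LRel e l) (h : y * l = l * x) : f * l = l := by
  have le := hl.mul_eq_self hx.mul_self
  obtain ⟨-, -, g, -, -, xg, -⟩ := hx
  calc
    f * l = f * (y * l) * g := by rw [h, mul_assoc, mul_assoc, xg, le]
    _ = l := by rw [← mul_assoc f, hy.1, h, mul_assoc, xg, le]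

theorem primConj_of_intertwiners (hGB : GroupBound S) (hx : InMaxSubgroup e x)
    (hy : InMaxSubgroup f y) (hl : LRel e l) (hm : LRel f m) (yl : y * l = l * x)
    (xm : x * m = m * y) : PrimConj x y := by
  have fl := mul_eq_self_of_mul_eq_mul hx hy hl yl
  have em := mul_eq_self_of_mul_eq_mul hy hx hm xm
  have le := hl.mul_eq_self hx.mul_self
  obtain ⟨a, al⟩ := hl.exists_mul_eq hx.mul_self
  obtain ⟨b, bm⟩ := hm.exists_mul_eq hy.mul_self
  have abml : a * b * (m * l) = e := calc
    a * b * (m * l) = a * (b * m * l) := by simp only [mul_assoc]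
    _ = e := by rw [bm, fl, al]
  have hml : InMaxSubgroup e (m * l) :=
    hGB.inMaxSubgroup_of_mul_eq (by rw [← mul_assoc, em]) (by rw [mul_assoc, le]) abml
  obtain ⟨-, -, v, -, -, mlv, vml⟩ := hml
  have lvm : l * v * m = f := calc
    l * v * m = b * m * l * v * m := by rw [bm, fl]
    _ = b * (m * l * v) * m := by simp only [mul_assoc]
    _ = f := by rw [mlv, mul_assoc, em, bm]
  have hx' : x * v * m * l = x := by rw [mul_assoc, mul_assoc, vml, hx.2.1]
  have hy' : l * (x * v * m) = y := calc
    l * (x * v * m) = y * (l * v * m) := by simp only [← mul_assoc, yl]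
    _ = y := by rw [lvm, hy.2.1]
  have := primConj_mul_comm (x * v * m) l
  rwa [hx', hy'] at this

end Conjugacy

section Trace

open Module.End in
theorem trace_mul_eq_sum_maxGenEigenspace {K V : Type*} [Field K] [IsAlgClosed K]
    [AddCommGroup V] [Module K V] [FiniteDimensional K V] {f r : Module.End K V}
    (h : Commute r f) :
    LinearMap.trace K V (f * r) =
      ∑ μ ∈ (WellFoundedGT.finite_ne_bot_of_iSupIndep r.independent_maxGenEigenspace).toFinset,
        μ * LinearMap.trace K _ (f.restrict (mapsTo_maxGenEigenspace_of_comm h μ)) := by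
  classical
  have hint : DirectSum.IsInternal r.maxGenEigenspace :=
    (DirectSum.isInternal_submodule_iff_iSupIndep_and_iSup_eq_top _).2
      ⟨r.independent_maxGenEigenspace, r.iSup_maxGenEigenspace_eq_top⟩
  have hf := mapsTo_maxGenEigenspace_of_comm h
  have hr := mapsTo_maxGenEigenspace_of_comm (Commute.refl r)
  rw [LinearMap.trace_eq_sum_trace_restrict' hint
    (WellFoundedGT.finite_ne_bot_of_iSupIndep r.independent_maxGenEigenspace)
    (f := f * r) fun μ => (hf μ).comp (hr μ)]
  refine Finset.sum_congr rfl fun μ _ => ?_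
  have hcomm : Commute (f.restrict (hf μ)) (r.restrict (hr μ)) :=
    LinearMap.ext fun v => Subtype.ext (LinearMap.congr_fun h.symm.eq v)
  exact LinearMap.trace_comp_eq_mul_of_commute_of_isNilpotent μ hcomm
    (r.isNilpotent_restrict_maxGenEigenspace_sub_algebraMap μ)

/-- The subrepresentation of `φ` carried by an invariant subspace `p`. -/
def restrictHom {S K V : Type*} [Semigroup S] [Semiring K] [AddCommMonoid V] [Module K V]
    (φ : S →ₙ* Module.End K V) (p : Submodule K V) (hp : ∀ s, Set.MapsTo (φ s) p p) :
    S →ₙ* Module.End K p where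
  toFun s := (φ s).restrict (hp s)
  map_mul' s t := LinearMap.ext fun v => Subtype.ext (LinearMap.congr_fun (map_mul φ s t) v)

end Trace

section Characters

variable {S : Type*} [Semigroup S] {x y z : S}

namespace CharEq

theorem symm (h : CharEq x y) : CharEq y x :=
  fun V _ _ hV φ => (h V _ _ hV φ).symm

theorem trans (hxy : CharEq x y) (hyz : CharEq y z) : CharEq x z :=
  fun V _ _ hV φ => (hxy V _ _ hV φ).trans (hyz V _ _ hV φ)

/-- `CharEq` quantifies over representations in `Type`; coordinates remove the restriction. -/
theorem trace_eq (h : CharEq x y) {V : Type*} [AddCommGroup V] [Module ℂ V]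
    [FiniteDimensional ℂ V] (φ : S →ₙ* Module.End ℂ V) :
    LinearMap.trace ℂ V (φ x) = LinearMap.trace ℂ V (φ y) := by
  let E := (Module.finBasis ℂ V).equivFun
  let ψ : S →ₙ* Module.End ℂ (Fin (Module.finrank ℂ V) → ℂ) :=
    (E.conjRingEquiv : _ →ₙ* _).comp φ
  have hψ (s : S) : LinearMap.trace ℂ _ (ψ s) = LinearMap.trace ℂ V (φ s) :=
    LinearMap.trace_conj' (φ s) E
  rw [← hψ, ← hψ]
  exact h _ _ _ inferInstance ψ

theorem trace_mul_eq_of_commute (h : CharEq x y) {V : Type*} [AddCommGroup V] [Module ℂ V]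
    [FiniteDimensional ℂ V] (φ : S →ₙ* Module.End ℂ V) {r : Module.End ℂ V}
    (hr : ∀ s, Commute r (φ s)) :
    LinearMap.trace ℂ V (φ x * r) = LinearMap.trace ℂ V (φ y * r) := by
  rw [trace_mul_eq_sum_maxGenEigenspace (hr x), trace_mul_eq_sum_maxGenEigenspace (hr y)]
  refine Finset.sum_congr rfl fun μ _ => congrArg (μ * ·) ?_
  exact h.trace_eq (restrictHom φ (r.maxGenEigenspace μ) fun s =>
    Module.End.mapsTo_maxGenEigenspace_of_comm (hr s) μ)

end CharEq

theorem PrimConj.charEq (h : PrimConj x y) : CharEq x y := by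
  obtain ⟨u, v, hx, hy⟩ := h
  intro V _ _ _ φ
  rw [← WithOne.lift_coe φ x, ← WithOne.lift_coe φ y, hx, hy, map_mul (WithOne.lift φ),
    map_mul (WithOne.lift φ), LinearMap.trace_mul_comm]

theorem SgConj.charEq (h : SgConj x y) : CharEq x y := by
  induction h with
  | single h => exact h.charEq
  | tail _ h ih => exact ih.trans h.charEq

end Characters

section PartialMaps

variable {α β γ : Type*} (K : Type*)

/-- The 0-1 matrix of a partial map, whose column `j` is the basis vector of `f j`, or zero where
`f j` is undefined. -/
def partialMapMatrix [Zero K] [One K] [DecidableEq β] (f : α → Option β) : Matrix β α K :=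
  Matrix.of fun i j => if i ∈ f j then 1 else 0

theorem partialMapMatrix_bind [NonAssocSemiring K] [Fintype β] [DecidableEq β] [DecidableEq γ]
    (f : α → Option β) (g : β → Option γ) :
    partialMapMatrix K (fun a => (f a).bind g) = partialMapMatrix K g * partialMapMatrix K f := by
  ext i j
  cases hj : f j <;> simp [partialMapMatrix, Matrix.mul_apply, hj]

theorem trace_partialMapMatrix [AddCommMonoidWithOne K] [Fintype α] [DecidableEq α]
    (f : α → Option α) :
    (partialMapMatrix K f).trace = (Finset.univ.filter fun a => a ∈ f a).card := by
  simp [partialMapMatrix, Matrix.trace]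

end PartialMaps

section Schutzenberger

variable {S : Type*} [Semigroup S] {c e g x y : S}

/-- The `L`-class of `c`, as a type. -/
abbrev LClass (c : S) : Type _ := {l : S // LRel c l}

open Classical in
/-- Left multiplication by `s` as a partial map on the `L`-class of `c`, undefined where it leaves
the class. -/
noncomputable def lClassAct (c s : S) (l : LClass c) : Option (LClass c) :=
  if h : LRel c (s * l) then some ⟨s * l, h⟩ else none

theorem mem_lClassAct {s : S} {l m : LClass c} : m ∈ lClassAct c s l ↔ s * l = (m : S) := by
  unfold lClassAct
  split_ifs with h
  · simp [Subtype.ext_iff]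
  · simpa using fun hm : s * (l : S) = m => h (hm ▸ m.2)

theorem lClassAct_mul (c s t : S) :
    lClassAct c (s * t) = fun l => (lClassAct c t l).bind (lClassAct c s) := by
  ext l m
  simp only [← Option.mem_def, Option.mem_bind_iff, mem_lClassAct, mul_assoc]
  constructor
  · intro h
    exact ⟨⟨t * l, l.2.of_mul_mul (h ▸ m.2)⟩, rfl, h⟩
  · rintro ⟨p, hp, h⟩
    rw [hp, h]

theorem InMaxSubgroup.lRel_mul_iff {t : S} (hg : InMaxSubgroup e g) (ht : t * e = t) :
    LRel e (t * g) ↔ LRel e t := by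
  have lRel_mul {u a : S} (ha : InMaxSubgroup e a) (hu : LRel e u) : LRel e (u * a) :=
    ha.lRel.trans (by simpa only [ha.1] using hu.mul_right a)
  refine ⟨fun h => ?_, lRel_mul hg⟩
  obtain ⟨b, hb, gb, -⟩ := hg.exists_inverse
  simpa only [mul_assoc, gb, ht] using lRel_mul hb h

/-- Right multiplication by an element `g` of the maximal subgroup at `e`, acting on the `L`-class
of `e`. -/
def lClassMulRight (hg : InMaxSubgroup e g) (l : LClass e) : LClass e :=
  ⟨l * g, (hg.lRel_mul_iff (l.2.mul_eq_self hg.mul_self)).2 l.2⟩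

theorem lClassAct_lClassMulRight (hg : InMaxSubgroup e g) (s : S) (l : LClass e) :
    lClassAct e s (lClassMulRight hg l) = (lClassAct e s l).map (lClassMulRight hg) := by
  ext m
  simp only [← Option.mem_def, Option.mem_map, mem_lClassAct, lClassMulRight, Subtype.ext_iff,
    ← mul_assoc]
  have hsl : s * (l : S) * e = s * l := by rw [mul_assoc, l.2.mul_eq_self hg.mul_self]
  constructor
  · intro h
    exact ⟨⟨s * l, (hg.lRel_mul_iff hsl).1 (h ▸ m.2)⟩, rfl, h⟩
  · rintro ⟨p, hp, h⟩
    rw [hp, h]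

open Classical in
/-- The left Schützenberger representation of `S` on the `K`-valued functions on a finite
`L`-class. -/
noncomputable def lClassRep (K : Type*) [CommSemiring K] (c : S) [Fintype (LClass c)] :
    S →ₙ* Module.End K (LClass c → K) where
  toFun s := (partialMapMatrix K (lClassAct c s)).toLin'
  map_mul' s t := by
    rw [lClassAct_mul, partialMapMatrix_bind, Matrix.toLin'_mul, Module.End.mul_eq_comp]

open Classical in
/-- Right translation by `g`, as an endomorphism of the left Schützenberger representation. -/
noncomputable def lClassMulRightEnd (K : Type*) [CommSemiring K] [Fintype (LClass e)]
    (hg : InMaxSubgroup e g) : Module.End K (LClass e → K) :=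
  (partialMapMatrix K fun l => some (lClassMulRight hg l)).toLin'

open Classical in
theorem lClassRep_mul_lClassMulRightEnd (K : Type*) [CommSemiring K] [Fintype (LClass e)]
    (hg : InMaxSubgroup e g) (s : S) :
    lClassRep K e s * lClassMulRightEnd K hg =
      (partialMapMatrix K fun l => lClassAct e s (lClassMulRight hg l)).toLin' := by
  change Matrix.toLin' _ ∘ₗ Matrix.toLin' _ = _
  rw [← Matrix.toLin'_mul, ← partialMapMatrix_bind]
  rfl

theorem commute_lClassMulRightEnd (K : Type*) [CommSemiring K] [Fintype (LClass e)]
    (hg : InMaxSubgroup e g) (s : S) : Commute (lClassMulRightEnd K hg) (lClassRep K e s) := by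
  classical
  rw [Commute, SemiconjBy, lClassRep_mul_lClassMulRightEnd]
  simp_rw [lClassAct_lClassMulRight, Option.map_eq_bind, partialMapMatrix_bind]
  exact (Matrix.toLin'_mul _ _).symm

open Classical in
theorem trace_lClassRep_mul_lClassMulRightEnd (K : Type*) [CommSemiring K] [Fintype (LClass e)]
    (hg : InMaxSubgroup e g) (s : S) :
    LinearMap.trace K _ (lClassRep K e s * lClassMulRightEnd K hg) =
      (Finset.univ.filter fun l : LClass e => s * (l * g) = l).card := by
  rw [lClassRep_mul_lClassMulRightEnd, Matrix.trace_toLin'_eq, trace_partialMapMatrix]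
  simp only [mem_lClassAct, lClassMulRight]

/-- For `g = x⁻¹` the trace of `s` times right translation by `g` counts the `l` with
`s * l = l * x`, and `l = e` is counted for `s = x`. -/
theorem CharEq.exists_intertwiner (h : CharEq x y) (hL : {l : S | LRel e l}.Finite)
    (hx : InMaxSubgroup e x) : ∃ l, LRel e l ∧ y * l = l * x := by
  classical
  have : Fintype (LClass e) := hL.fintype
  obtain ⟨g, hg, xg, gx⟩ := hx.exists_inverse
  have hcard := h.trace_mul_eq_of_commute (lClassRep ℂ e) (commute_lClassMulRightEnd ℂ hg)
  rw [trace_lClassRep_mul_lClassMulRightEnd, trace_lClassRep_mul_lClassMulRightEnd,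
    Nat.cast_inj] at hcard
  have hpos : 0 < (Finset.univ.filter fun l : LClass e => x * (l * g) = l).card :=
    Finset.card_pos.2 ⟨⟨e, .refl e⟩, by simp [hg.1, xg]⟩
  obtain ⟨⟨l, hl⟩, hfix⟩ := Finset.card_pos.1 (hcard ▸ hpos)
  have yl : y * (l * g) = l := (Finset.mem_filter.1 hfix).2
  refine ⟨l, hl, ?_⟩
  calc
    y * l = y * (l * g) * x := by rw [mul_assoc, mul_assoc, gx, hl.mul_eq_self hx.mul_self]
    _ = l * x := by rw [yl]

end Schutzenberger

theorem CharEq.primConj {S : Type*} [Semigroup S] {e f x y : S} (hGB : GroupBound S)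
    (hL : ∀ a : S, {b : S | LRel a b}.Finite) (hx : InMaxSubgroup e x) (hy : InMaxSubgroup f y)
    (h : CharEq x y) : PrimConj x y := by
  obtain ⟨l, hl, yl⟩ := h.exists_intertwiner (hL e) hx
  obtain ⟨m, hm, xm⟩ := h.symm.exists_intertwiner (hL f) hy
  exact primConj_of_intertwiners hGB hx hy hl hm yl xm

theorem conj_iff_charEq_general {S : Type*} [Semigroup S]
    (hreg : Regular S) (hGB : GroupBound S) (hL : ∀ a : S, {b : S | LRel a b}.Finite)
    (x y : S) : SgConj x y ↔ CharEq x y := by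
  refine ⟨SgConj.charEq, fun h => ?_⟩
  obtain ⟨e, k, he⟩ := hGB x
  obtain ⟨f, n, hf⟩ := hGB y
  have hx : SgConj x (x * e) := hreg.sgConj_mul_idem he
  have hy : SgConj y (y * f) := hreg.sgConj_mul_idem hf
  have hxy : CharEq (x * e) (y * f) := hx.symm.charEq.trans (h.trans hy.charEq)
  have hp := hxy.primConj hGB hL he.mul_idem_of_spow hf.mul_idem_of_spow
  exact (hx.tail hp).trans hy.symm

/-- Theorem 1: in a regular group-bound semigroup with finite `D`-classes,
two elements are conjugate iff they are conjugate in the character sense. -/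
theorem conj_iff_charEq {S : Type*} [Semigroup S]
    (hreg : Regular S) (hGB : GroupBound S) (hD : FiniteDClasses S)
    (x y : S) : SgConj x y ↔ CharEq x y :=
  conj_iff_charEq_general hreg hGB (fun a => (hD a).subset fun b hab =>
    ⟨b, hab, ⟨1, (mul_one _).symm⟩, ⟨1, (mul_one _).symm⟩⟩) x y

end SgConjPaper
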